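/- For every positive integer n and for each of the four families H ∈ {{rrb, rry}, {rrb, bbr}, {rrb, bby}, {rry, bby}} of two triangle patterns, h_2(n, H) = ⌈√n⌉. -/

import Mathlib

/-- The three edge colors: red, blue, yellow. -/
inductive Col : Type
  | r | b | y
  deriving DecidableEq

/-- A (symmetric) 3-edge-coloring of the complete graph `K_n` on vertex set `Fin n`. -/
structure Coloring (n : ℕ) where
  col : Fin n → Fin n → Col
  symm : ∀ i j, col i j = col j i

/-- The pattern (multiset of edge colors) of the triangle on vertices `u, v, w`. -/
def triPattern {n : ℕ} (c : Coloring n) (u v w : Fin n) : Multiset Col :=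
  {c.col u v, c.col v w, c.col u w}

/-- The coloring `c` contains the pattern `P`: some triangle has color multiset `P`. -/
def Contains {n : ℕ} (c : Coloring n) (P : Multiset Col) : Prop :=
  ∃ u v w : Fin n, u ≠ v ∧ v ≠ w ∧ u ≠ w ∧ triPattern c u v w = P

/-- The coloring `c` avoids every pattern in the family `H`. -/
def Avoids {n : ℕ} (c : Coloring n) (H : Set (Multiset Col)) : Prop :=
  ∀ P ∈ H, ¬ Contains c P

/-- A vertex set `S` is two-colored under `c`: the edges inside `S` use at most
two of the three colors, i.e. some color is missing on the edges inside `S`. -/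
def TwoColored {n : ℕ} (c : Coloring n) (S : Finset (Fin n)) : Prop :=
  ∃ x : Col, ∀ i ∈ S, ∀ j ∈ S, i ≠ j → c.col i j ≠ x

/-- `h2 c` is the maximum size of a vertex set whose induced edges use at most
two of the three colors. -/
noncomputable def h2 {n : ℕ} (c : Coloring n) : ℕ :=
  sSup {k | ∃ S : Finset (Fin n), TwoColored c S ∧ S.card = k}

/-- `h2n n H = min { h2 c : c a 3-edge-coloring of K_n avoiding all patterns in H }`. -/
noncomputable def h2n (n : ℕ) (H : Set (Multiset Col)) : ℕ :=
  sInf {m | ∃ c : Coloring n, Avoids c H ∧ h2 c = m}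

/-- Pattern abbreviations. -/
def Prrr : Multiset Col := {Col.r, Col.r, Col.r}
def Pbbb : Multiset Col := {Col.b, Col.b, Col.b}
def Pyyy : Multiset Col := {Col.y, Col.y, Col.y}
def Prrb : Multiset Col := {Col.r, Col.r, Col.b}
def Prry : Multiset Col := {Col.r, Col.r, Col.y}
def Pbbr : Multiset Col := {Col.b, Col.b, Col.r}
def Pbby : Multiset Col := {Col.b, Col.b, Col.y}
def Pyyr : Multiset Col := {Col.y, Col.y, Col.r}
def Pyyb : Multiset Col := {Col.y, Col.y, Col.b}
def Prby : Multiset Col := {Col.r, Col.b, Col.y}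

/-
Lower bound: let `s` and `t ≠ s` be colors such that the pattern `sst` is avoided. A vertex together
with its `s`-neighbors spans no edge of color `t`, so it has at most `h2 c` vertices; and a maximum
set without edges of color `s` also has at most `h2 c` vertices. The closed `s`-neighborhoods of the
latter set cover all vertices, hence `n ≤ h2 c ^ 2`.

Upper bound: place the vertices in a `k × k` grid with `k = ⌈√n⌉`, coloring an edge by whether it
lies in a row, in a column, or in neither. Lying in a common row is transitive, and so is lying in
a common column, so no triangle has exactly two edges of either of these two colors. A set missing
one of the three colors meets every row, respectively every column, respectively every diagonal
`row + column = const` modulo `k`, at most once, so it has at most `k` vertices.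
-/

theorem card_le_indepNum_mul {V : Type*} [Fintype V] (G : SimpleGraph V) [DecidableRel G.Adj]
    {m : ℕ} (hdeg : ∀ v, G.degree v < m) : Fintype.card V ≤ G.indepNum * m := by
  classical
  obtain ⟨S, hS⟩ := G.maximumIndepSet_exists
  have hcover : (Finset.univ : Finset V) ⊆ S.biUnion fun v ↦ insert v (G.neighborFinset v) := by
    intro u _
    by_contra hu
    simp only [Finset.mem_biUnion, Finset.mem_insert, SimpleGraph.mem_neighborFinset, not_exists,
      not_and, not_or] at hu
    have huS : u ∉ S := fun h ↦ (hu u h).1 rfl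
    have hind : G.IsIndepSet ↑(insert u S) := by
      rw [Finset.coe_insert]
      exact hS.isIndepSet.insert fun v hv _ ↦ ⟨fun h ↦ (hu v hv).2 h.symm, (hu v hv).2⟩
    have hcard := hS.maximum _ hind
    rw [Finset.card_insert_of_notMem huS] at hcard
    exact hcard.not_gt S.card.lt_succ_self
  calc Fintype.card V ≤ (S.biUnion fun v ↦ insert v (G.neighborFinset v)).card :=
        Finset.card_le_card hcover
    _ ≤ S.card * m := Finset.card_biUnion_le_card_mul _ _ _ fun v _ ↦
        (Finset.card_insert_le _ _).trans (hdeg v)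
    _ = G.indepNum * m := by rw [G.maximumIndepSet_card_eq_indepNum S hS]

theorem ceil_sqrt_le_iff {n m : ℕ} : ⌈Real.sqrt n⌉₊ ≤ m ↔ n ≤ m * m := by
  rw [Nat.ceil_le, Real.sqrt_le_left m.cast_nonneg, sq]
  exact_mod_cast Iff.rfl

theorem Col.exists_forall_eq_or_eq_or_eq (z : Col) :
    ∃ p q : Col, p ≠ q ∧ p ≠ z ∧ q ≠ z ∧ ∀ s, s = p ∨ s = q ∨ s = z := by
  cases z
  · exact ⟨.b, .y, by decide, by decide, by decide, by rintro (_ | _ | _) <;> decide⟩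
  · exact ⟨.r, .y, by decide, by decide, by decide, by rintro (_ | _ | _) <;> decide⟩
  · exact ⟨.r, .b, by decide, by decide, by decide, by rintro (_ | _ | _) <;> decide⟩

theorem triple_eq_triple_self_iff {β : Type*} {u v w s t : β} :
    ({u, v, w} : Multiset β) = {s, s, t} ↔
      u = s ∧ v = s ∧ w = t ∨ u = s ∧ v = t ∧ w = s ∨ u = t ∧ v = s ∧ w = s := by
  classical
  constructor
  · intro h
    have hs := congrArg (Multiset.count s) h
    have ht := congrArg (Multiset.count t) h
    simp only [Multiset.insert_eq_cons, Multiset.count_cons, Multiset.count_singleton] at hs ht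
    grind
  · rintro (⟨rfl, rfl, rfl⟩ | ⟨rfl, rfl, rfl⟩ | ⟨rfl, rfl, rfl⟩) <;> ext x <;>
      simp only [Multiset.insert_eq_cons, Multiset.count_cons, Multiset.count_singleton] <;> ring

/-- The color class of `s` under `c`: the graph whose edges are the edges of color `s`. It
turns the vertex sets missing the color `s` into the independent sets of a `SimpleGraph`. -/
def Coloring.colorGraph {n : ℕ} (c : Coloring n) (s : Col) : SimpleGraph (Fin n) where
  Adj i j := i ≠ j ∧ c.col i j = s
  symm := ⟨fun _ _ h ↦ ⟨h.1.symm, (c.symm _ _).trans h.2⟩⟩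
  loopless := ⟨fun _ h ↦ h.1 rfl⟩

/-- The patterns with exactly two edges of one color, where that repeated color is not `z`. They are
the patterns `sst` avoided by a grid coloring with off-line color `z`. -/
def repeatPatterns (z : Col) : Set (Multiset Col) :=
  {P | ∃ s t, s ≠ z ∧ t ≠ s ∧ P = {s, s, t}}

/-- The grid coloring attached to coordinates `e`: color `p` within a row, color `q` within a
column, and color `z` otherwise. The coordinates are arbitrary, so that `n` need not be a square. -/
def Coloring.grid {n : ℕ} {α : Type*} [DecidableEq α] (e : Fin n → α × α) (p q z : Col) :
    Coloring n where
  col i j := if (e i).1 = (e j).1 then p else if (e i).2 = (e j).2 then q else z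
  symm i j := by simp only [eq_comm]

section TwoColoredSets

variable {n : ℕ} {c : Coloring n} {s t : Col}

theorem twoColored_iff_exists_isIndepSet {S : Finset (Fin n)} :
    TwoColored c S ↔ ∃ s, (c.colorGraph s).IsIndepSet S :=
  exists_congr fun _ ↦ ⟨fun h _ hi _ hj hij hadj ↦ h _ hi _ hj hij hadj.2,
    fun h _ hi _ hj hij hcol ↦ h hi hj hij ⟨hij, hcol⟩⟩

theorem contains_iff_exists_adj :
    Contains c {s, s, t} ↔ ∃ u v w,
      (c.colorGraph s).Adj u v ∧ (c.colorGraph s).Adj v w ∧ (c.colorGraph t).Adj u w := by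
  constructor
  · rintro ⟨u, v, w, huv, hvw, huw, hpat⟩
    rcases triple_eq_triple_self_iff.1 hpat with ⟨h₁, h₂, h₃⟩ | ⟨h₁, h₂, h₃⟩ | ⟨h₁, h₂, h₃⟩
    · exact ⟨u, v, w, ⟨huv, h₁⟩, ⟨hvw, h₂⟩, huw, h₃⟩
    · exact ⟨v, u, w, .symm ⟨huv, h₁⟩, ⟨huw, h₃⟩, hvw, h₂⟩
    · exact ⟨u, w, v, ⟨huw, h₃⟩, .symm ⟨hvw, h₂⟩, huv, h₁⟩
  · rintro ⟨u, v, w, ⟨huv, h₁⟩, ⟨hvw, h₂⟩, huw, h₃⟩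
    exact ⟨u, v, w, huv, hvw, huw, triple_eq_triple_self_iff.2 (.inl ⟨h₁, h₂, h₃⟩)⟩

theorem h2_le_iff {m : ℕ} : h2 c ≤ m ↔ ∀ S, TwoColored c S → S.card ≤ m := by
  have hbdd : BddAbove {k | ∃ S : Finset (Fin n), TwoColored c S ∧ S.card = k} :=
    ⟨_, by rintro k ⟨S, -, rfl⟩; exact S.card_le_univ⟩
  have hne : {k | ∃ S : Finset (Fin n), TwoColored c S ∧ S.card = k}.Nonempty :=
    ⟨0, ∅, ⟨.r, by simp⟩, rfl⟩
  rw [h2, csSup_le_iff hbdd hne]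
  exact ⟨fun h S hS ↦ h _ ⟨S, hS, rfl⟩, by rintro h _ ⟨S, hS, rfl⟩; exact h S hS⟩

theorem card_le_h2 {S : Finset (Fin n)} (hS : TwoColored c S) : S.card ≤ h2 c :=
  h2_le_iff.1 le_rfl S hS

theorem h2n_le_h2 {H : Set (Multiset Col)} (hc : Avoids c H) : h2n n H ≤ h2 c :=
  Nat.sInf_le ⟨c, hc, rfl⟩

theorem le_h2n {H : Set (Multiset Col)} {m : ℕ} (hne : ∃ c : Coloring n, Avoids c H)
    (hm : ∀ c : Coloring n, Avoids c H → m ≤ h2 c) : m ≤ h2n n H := by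
  obtain ⟨c, hc⟩ := hne
  refine le_csInf ⟨h2 c, c, hc, rfl⟩ ?_
  rintro _ ⟨d, hd, rfl⟩
  exact hm d hd

end TwoColoredSets

section LowerBound

variable {n : ℕ} {c : Coloring n} {s t : Col}

theorem indepNum_colorGraph_le_h2 (c : Coloring n) (s : Col) :
    (c.colorGraph s).indepNum ≤ h2 c := by
  obtain ⟨S, hS⟩ := (c.colorGraph s).exists_isNIndepSet_indepNum
  rw [← hS.card_eq]
  exact card_le_h2 (twoColored_iff_exists_isIndepSet.2 ⟨s, hS.isIndepSet⟩)

theorem degree_colorGraph_lt_h2 [DecidableRel (c.colorGraph s).Adj] (hst : t ≠ s)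
    (hc : ¬ Contains c {s, s, t}) (v : Fin n) : (c.colorGraph s).degree v < h2 c := by
  have hind : (c.colorGraph t).IsIndepSet (insert v ((c.colorGraph s).neighborSet v)) := by
    refine Set.Pairwise.insert (fun i hi j hj _ hij ↦ ?_) fun i hi _ ↦ ?_
    · exact hc (contains_iff_exists_adj.2 ⟨i, v, j, hi.symm, hj, hij⟩)
    · have hvi : ¬ (c.colorGraph t).Adj v i := fun h ↦ hst (h.2.symm.trans hi.2)
      exact ⟨hvi, fun h ↦ hvi h.symm⟩
  rw [← Nat.succ_le_iff, ← SimpleGraph.card_neighborFinset_eq_degree, Nat.succ_eq_add_one,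
    ← Finset.card_insert_of_notMem ((c.colorGraph s).notMem_neighborFinset_self v)]
  exact card_le_h2 (twoColored_iff_exists_isIndepSet.2 ⟨t, by simpa using hind⟩)

theorem le_h2_mul_h2 (hst : t ≠ s) (hc : ¬ Contains c {s, s, t}) : n ≤ h2 c * h2 c := by
  classical
  calc n = Fintype.card (Fin n) := (Fintype.card_fin n).symm
    _ ≤ (c.colorGraph s).indepNum * h2 c :=
        card_le_indepNum_mul _ (degree_colorGraph_lt_h2 hst hc)
    _ ≤ h2 c * h2 c := Nat.mul_le_mul_right _ (indepNum_colorGraph_le_h2 c s)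

end LowerBound

section UpperBound

variable {n : ℕ} {c : Coloring n} {α : Type*} {s t p q z : Col}

theorem not_contains_of_adj_iff {f : Fin n → α}
    (hf : ∀ i j, i ≠ j → ((c.colorGraph s).Adj i j ↔ f i = f j)) (hst : t ≠ s) :
    ¬ Contains c {s, s, t} := by
  rw [contains_iff_exists_adj]
  rintro ⟨u, v, w, huv, hvw, huw⟩
  have hfuw : f u = f w := ((hf u v huv.ne).1 huv).trans ((hf v w hvw.ne).1 hvw)
  exact hst (huw.2.symm.trans ((hf u w huw.ne).2 hfuw).2)

theorem h2_le_card [Fintype α]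
    (hc : ∀ s, ∃ f : Fin n → α, ∀ i j, i ≠ j → f i = f j → (c.colorGraph s).Adj i j) :
    h2 c ≤ Fintype.card α := by
  refine h2_le_iff.2 fun S hS ↦ ?_
  obtain ⟨s, hind⟩ := twoColored_iff_exists_isIndepSet.1 hS
  obtain ⟨f, hf⟩ := hc s
  refine Finset.card_le_card_of_injOn f (fun _ _ ↦ Finset.mem_univ _) fun i hi j hj hij ↦ ?_
  by_contra hne
  exact hind hi hj hne (hf i j hne hij)

variable [DecidableEq α] {e : Fin n → α × α} {i j : Fin n}

theorem adj_grid_row_iff (hpq : p ≠ q) (hpz : p ≠ z) (hij : i ≠ j) :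
    ((Coloring.grid e p q z).colorGraph p).Adj i j ↔ (e i).1 = (e j).1 := by
  simp only [Coloring.colorGraph, Coloring.grid]
  grind

theorem adj_grid_column_iff (he : e.Injective) (hpq : p ≠ q) (hqz : q ≠ z) (hij : i ≠ j) :
    ((Coloring.grid e p q z).colorGraph q).Adj i j ↔ (e i).2 = (e j).2 := by
  have hne : ¬ ((e i).1 = (e j).1 ∧ (e i).2 = (e j).2) := fun h ↦ hij (he (Prod.ext h.1 h.2))
  simp only [Coloring.colorGraph, Coloring.grid]
  grind

theorem adj_grid_of_add_eq [Add α] [IsCancelAdd α] (he : e.Injective) (hij : i ≠ j)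
    (hadd : (e i).1 + (e i).2 = (e j).1 + (e j).2) :
    ((Coloring.grid e p q z).colorGraph z).Adj i j := by
  have hrow : (e i).1 ≠ (e j).1 := fun h ↦
    hij (he (Prod.ext h (add_left_cancel (hadd.trans (by rw [h])))))
  have hcolumn : (e i).2 ≠ (e j).2 := fun h ↦
    hij (he (Prod.ext (add_right_cancel (hadd.trans (by rw [h]))) h))
  exact ⟨hij, by simp only [Coloring.grid, if_neg hrow, if_neg hcolumn]⟩

theorem h2_grid_le_card [Fintype α] [Add α] [IsCancelAdd α] (he : e.Injective) (hpq : p ≠ q)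
    (hpz : p ≠ z) (hqz : q ≠ z) (hcol : ∀ s, s = p ∨ s = q ∨ s = z) :
    h2 (Coloring.grid e p q z) ≤ Fintype.card α := by
  refine h2_le_card fun s ↦ ?_
  rcases hcol s with rfl | rfl | rfl
  · exact ⟨fun i ↦ (e i).1, fun i j hij ↦ (adj_grid_row_iff hpq hpz hij).2⟩
  · exact ⟨fun i ↦ (e i).2, fun i j hij ↦ (adj_grid_column_iff he hpq hqz hij).2⟩
  · exact ⟨fun i ↦ (e i).1 + (e i).2, fun i j ↦ adj_grid_of_add_eq he⟩

theorem exists_avoids_repeatPatterns_h2_le {k : ℕ} (hnk : n ≤ k * k) (z : Col) :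
    ∃ c : Coloring n, Avoids c (repeatPatterns z) ∧ h2 c ≤ k := by
  obtain ⟨e⟩ : Nonempty (Fin n ↪ Fin k × Fin k) :=
    Function.Embedding.nonempty_of_card_le (by simpa using hnk)
  obtain ⟨p, q, hpq, hpz, hqz, hcol⟩ := z.exists_forall_eq_or_eq_or_eq
  refine ⟨.grid e p q z, ?_, ?_⟩
  · rintro _ ⟨s, t, hsz, hst, rfl⟩
    rcases hcol s with rfl | rfl | rfl
    · exact not_contains_of_adj_iff (fun _ _ ↦ adj_grid_row_iff hpq hpz) hst
    · exact not_contains_of_adj_iff (fun _ _ ↦ adj_grid_column_iff e.injective hpq hqz) hst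
    · exact absurd rfl hsz
  · simpa using h2_grid_le_card e.injective hpq hpz hqz hcol

end UpperBound

theorem stmt2_general (n : ℕ) (z : Col) {H : Set (Multiset Col)} (hne : H.Nonempty)
    (hH : H ⊆ repeatPatterns z) : h2n n H = ⌈Real.sqrt n⌉₊ := by
  have hlower : ∀ c : Coloring n, Avoids c H → ⌈Real.sqrt n⌉₊ ≤ h2 c := by
    intro c hc
    obtain ⟨P, hP⟩ := hne
    obtain ⟨s, t, -, hst, rfl⟩ := hH hP
    exact ceil_sqrt_le_iff.2 (le_h2_mul_h2 hst (hc _ hP))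
  obtain ⟨c, hc, hck⟩ := exists_avoids_repeatPatterns_h2_le (ceil_sqrt_le_iff.1 le_rfl : n ≤ _) z
  have hcH : Avoids c H := fun P hP ↦ hc P (hH hP)
  exact le_antisymm ((h2n_le_h2 hcH).trans hck) (le_h2n ⟨c, hcH⟩ hlower)

theorem stmt2 (n : ℕ) (hn : 0 < n) :
    h2n n {Prrb, Prry} = ⌈Real.sqrt n⌉₊ ∧
    h2n n {Prrb, Pbbr} = ⌈Real.sqrt n⌉₊ ∧
    h2n n {Prrb, Pbby} = ⌈Real.sqrt n⌉₊ ∧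
    h2n n {Prry, Pbby} = ⌈Real.sqrt n⌉₊ := by
  refine ⟨?_, ?_, ?_, ?_⟩ <;> exact stmt2_general n .y (Set.insert_nonempty _ _) <|
    Set.pair_subset ⟨_, _, by decide, by decide, rfl⟩ ⟨_, _, by decide, by decide, rfl⟩
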